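/- Fix a ferromagnetic Ising model μ(J,h) on n nodes (J_{ij} ≥ 0, h_i ≥ 0). Suppose i ∈ [n] and S, T ⊆ [n] are such that I_i(T) > I_i(S). Then there exists j ∈ T \ S such that I_i(S ∪ {j}) − I_i(S) ≥ (I_i(T) − I_i(S)) / |T \ S|. -/

import Mathlib

/-!
The influence function is monotone and submodular; the theorem then follows by telescoping
`I_i(S ∪ T) - I_i(S)` over the elements of `T \ S` and averaging. Submodularity is a conditioned
form of the Griffiths–Hurst–Sherman inequality, proved with the four replicas of Ellis and Monroe.

Take four independent copies `x⁰, x¹, x², x³` of the model, conditioned to be `+1` on `A ∪ B`, `A`,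
`B`, `A ∩ B` respectively, and change variables at each site by an orthogonal `4 × 4` matrix
to `α, β, γ, δ` (`mode`). Orthogonality keeps the interaction ferromagnetic in the new variables,
and the field acts on `α` only, with a nonnegative coefficient. The conditioning is local: at each
site it says that one of `α`, `α + β`, `α + γ` takes its maximal value `2` (or says nothing), so
its indicator is the pointwise limit of `exp (m • (F - 2))`. Hence the joint weight lies in the
closed cone spanned by monomials in the modes (`fourWeight_mem`). Under the uniform measure every
such monomial has nonnegative sum, by a parity check at a single site (`sum_mode_monomial_nonneg`),
so every mode at `i` has nonnegative expectation (`mode_expectation_nonneg`). The mode `δ` gives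
submodularity; the mode `β`, for nested sets, gives monotonicity.
-/

open Finset
open scoped BigOperators Classical

noncomputable section

/-- The value of a spin: `true ↦ 1`, `false ↦ -1`. -/
def spin (b : Bool) : ℝ := if b then 1 else -1

/-- Boltzmann weight of a configuration of the Ising model `μ(J,h)`. -/
def isingWeight (n : ℕ) (J : Fin n → Fin n → ℝ) (h : Fin n → ℝ) (x : Fin n → Bool) : ℝ :=
  Real.exp ((1 / 2) * (∑ a, ∑ b, J a b * spin (x a) * spin (x b)) + ∑ a, h a * spin (x a))

/-- The discrete influence function `I_i(S) = E[X_i | X_s = 1 for all s ∈ S]`. -/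
def influence (n : ℕ) (J : Fin n → Fin n → ℝ) (h : Fin n → ℝ) (i : Fin n)
    (S : Finset (Fin n)) : ℝ :=
  (∑ x : Fin n → Bool, if ∀ s ∈ S, x s = true then spin (x i) * isingWeight n J h x else 0) /
  (∑ x : Fin n → Bool, if ∀ s ∈ S, x s = true then isingWeight n J h x else 0)

/-! ### The modes of four spins at a site -/

/-- Coefficients (before dividing by `2`) of the orthogonal change of variables between the four
replicas and the four modes. -/
def modeSign : Fin 4 → Fin 4 → ℝ :=
  ![![1, 1, 1, 1], ![1, 1, -1, -1], ![1, -1, 1, -1], ![-1, 1, 1, -1]]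

/-- The `k`-th mode `α, β, γ, δ` (for `k = 0, 1, 2, 3`) of four spins sitting at one site. -/
def mode (k : Fin 4) (q : Fin 4 → Bool) : ℝ := (∑ c, modeSign k c * spin (q c)) / 2

lemma mode_zero (q : Fin 4 → Bool) :
    mode 0 q = (spin (q 0) + spin (q 1) + spin (q 2) + spin (q 3)) / 2 := by
  simp [mode, modeSign, Fin.sum_univ_four]

lemma mode_one (q : Fin 4 → Bool) :
    mode 1 q = (spin (q 0) + spin (q 1) - spin (q 2) - spin (q 3)) / 2 := by
  simp [mode, modeSign, Fin.sum_univ_four]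
  ring

lemma mode_two (q : Fin 4 → Bool) :
    mode 2 q = (spin (q 0) - spin (q 1) + spin (q 2) - spin (q 3)) / 2 := by
  simp [mode, modeSign, Fin.sum_univ_four]
  ring

lemma mode_three (q : Fin 4 → Bool) :
    mode 3 q = (-spin (q 0) + spin (q 1) + spin (q 2) - spin (q 3)) / 2 := by
  simp [mode, modeSign, Fin.sum_univ_four]
  ring

lemma spin_le_one (b : Bool) : spin b ≤ 1 := by
  cases b <;> simp [spin]

/-- Single-site positivity: under the uniform measure on four spins, all mixed moments of the modes
are nonnegative. If three modes vanish, the remaining one is symmetric; otherwise the four modes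
run over the sign vectors with product `1`. -/
lemma sum_mode_monomial_nonneg (e : Fin 4 → ℕ) :
    0 ≤ ∑ q : Fin 4 → Bool, ∏ k, mode k q ^ e k := by
  have key : ∀ f : (Fin 4 → Bool) → ℝ, ∑ q, f q =
      ∑ a : Bool, ∑ b : Bool, ∑ c : Bool, ∑ d : Bool, f ![a, b, c, d] := by
    intro f
    rw [← (Fin.consEquiv (fun _ => Bool)).sum_comp, Fintype.sum_prod_type]
    refine Finset.sum_congr rfl fun a _ => ?_
    rw [← (Fin.consEquiv (fun _ => Bool)).sum_comp, Fintype.sum_prod_type]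
    refine Finset.sum_congr rfl fun b _ => ?_
    rw [← (Fin.consEquiv (fun _ => Bool)).sum_comp, Fintype.sum_prod_type]
    refine Finset.sum_congr rfl fun c _ => ?_
    rw [← (Fin.consEquiv (fun _ => Bool)).sum_comp, Fintype.sum_prod_type]
    refine Finset.sum_congr rfl fun d _ => ?_
    rw [Fintype.sum_unique]
    rfl
  have neg : ∀ (x : ℝ) (m : ℕ), (-x) ^ m = (-1) ^ m * x ^ m := fun x m => neg_pow x m
  rw [key]
  simp only [Fintype.sum_bool, Fin.prod_univ_four, mode_zero, mode_one, mode_two, mode_three]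
  simp [spin]
  norm_num
  -- only parities matter from here: every base is `0`, `1`, `2`, `-1` or `-2`
  rw [neg 2 (e 0), neg 2 (e 1), neg 2 (e 2), neg 2 (e 3)]
  rcases Nat.even_or_odd (e 0) with h0 | h0 <;> rcases Nat.even_or_odd (e 1) with h1 | h1 <;>
  rcases Nat.even_or_odd (e 2) with h2 | h2 <;> rcases Nat.even_or_odd (e 3) with h3 | h3 <;>
  simp only [h0.neg_one_pow, h1.neg_one_pow, h2.neg_one_pow, h3.neg_one_pow] <;>
  ring_nf <;> positivity

/-! ### The cone of mode polynomials -/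

/-- The monomials `c * ∏_{a,k} (mode k at a) ^ e a k` with `c ≥ 0`, as functions on four-replica
configurations. -/
def modeMonomials (n : ℕ) : Submonoid ((Fin n → Fin 4 → Bool) → ℝ) where
  carrier := {F | ∃ c : ℝ, 0 ≤ c ∧ ∃ e : Fin n → Fin 4 → ℕ,
    F = fun x => c * ∏ a, ∏ k, mode k (x a) ^ e a k}
  one_mem' := ⟨1, zero_le_one, 0, by ext x; simp⟩
  mul_mem' := by
    rintro _ _ ⟨c, hc, e, rfl⟩ ⟨d, hd, f, rfl⟩
    refine ⟨c * d, mul_nonneg hc hd, e + f, ?_⟩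
    ext x
    simp only [Pi.mul_apply, Pi.add_apply, pow_add, Finset.prod_mul_distrib]
    ring

/-- The closed cone spanned by the mode monomials; as these are closed under multiplication, it is
a subsemiring. -/
def modeCone (n : ℕ) : Subsemiring ((Fin n → Fin 4 → Bool) → ℝ) :=
  (modeMonomials n).subsemiringClosure.topologicalClosure

lemma modeMonomials_le {n : ℕ} {F : (Fin n → Fin 4 → Bool) → ℝ} (hF : F ∈ modeMonomials n) :
    F ∈ modeCone n := by
  apply Subsemiring.le_topologicalClosure
  rw [← SetLike.mem_coe, Submonoid.subsemiringClosure_coe]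
  exact AddSubmonoid.subset_closure hF

lemma const_mem {n : ℕ} {c : ℝ} (hc : 0 ≤ c) : (fun _ => c) ∈ modeCone n :=
  modeMonomials_le ⟨c, hc, 0, by ext x; simp⟩

lemma mode_mem {n : ℕ} (k : Fin 4) (a : Fin n) : (fun x => mode k (x a)) ∈ modeCone n := by
  refine modeMonomials_le ⟨1, zero_le_one, Pi.single a (Pi.single k 1), ?_⟩
  ext x
  rw [Finset.prod_eq_single a, Finset.prod_eq_single k]
  · simp
  · intro b _ hb
    simp [hb]
  · simp
  · intro b _ hb
    simp [hb]
  · simp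

lemma mem_cone_of_tendsto {n : ℕ} {F : ℕ → (Fin n → Fin 4 → Bool) → ℝ}
    {G : (Fin n → Fin 4 → Bool) → ℝ} (hF : ∀ m, F m ∈ modeCone n)
    (h : ∀ x, Filter.Tendsto (fun m => F m x) Filter.atTop (nhds (G x))) : G ∈ modeCone n :=
  (Subsemiring.isClosed_topologicalClosure _).mem_of_tendsto (tendsto_pi_nhds.2 h)
    (Filter.Eventually.of_forall hF)

lemma mul_mem_cone {n : ℕ} {F G : (Fin n → Fin 4 → Bool) → ℝ} (hF : F ∈ modeCone n)
    (hG : G ∈ modeCone n) : (fun x => F x * G x) ∈ modeCone n :=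
  mul_mem hF hG

lemma add_mem_cone {n : ℕ} {F G : (Fin n → Fin 4 → Bool) → ℝ} (hF : F ∈ modeCone n)
    (hG : G ∈ modeCone n) : (fun x => F x + G x) ∈ modeCone n :=
  add_mem hF hG

lemma sum_mem_cone {n : ℕ} {ι : Type*} (s : Finset ι) {F : ι → (Fin n → Fin 4 → Bool) → ℝ}
    (hF : ∀ j ∈ s, F j ∈ modeCone n) : (fun x => ∑ j ∈ s, F j x) ∈ modeCone n := by
  have := sum_mem hF
  convert this using 1
  ext x
  simp

lemma prod_mem_cone {n : ℕ} {ι : Type*} (s : Finset ι) {F : ι → (Fin n → Fin 4 → Bool) → ℝ}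
    (hF : ∀ j ∈ s, F j ∈ modeCone n) : (fun x => ∏ j ∈ s, F j x) ∈ modeCone n := by
  have := prod_mem hF
  convert this using 1
  ext x
  simp

lemma exp_mem {n : ℕ} {F : (Fin n → Fin 4 → Bool) → ℝ} (hF : F ∈ modeCone n) :
    (fun x => Real.exp (F x)) ∈ modeCone n := by
  refine mem_cone_of_tendsto
    (F := fun m x => ∑ j ∈ Finset.range m, (j.factorial : ℝ)⁻¹ * F x ^ j) ?_ ?_
  · intro m
    refine sum_mem_cone _ fun j _ => mul_mem_cone (const_mem (by positivity)) ?_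
    exact pow_mem hF j
  · intro x
    have := (NormedSpace.expSeries_div_hasSum_exp (F x)).tendsto_sum_nat
    rw [← Real.exp_eq_exp_ℝ] at this
    simpa only [div_eq_inv_mul] using this

/-- The event that an element of the cone attains an upper bound `c` has its indicator in the cone,
as the limit of `exp (m • (F - c))`. -/
lemma indicator_mem {n : ℕ} {F : (Fin n → Fin 4 → Bool) → ℝ} (hF : F ∈ modeCone n) (c : ℝ)
    (hc : ∀ x, F x ≤ c) : (fun x => if F x = c then (1 : ℝ) else 0) ∈ modeCone n := by
  refine mem_cone_of_tendsto
    (F := fun m x => Real.exp (-(m * c)) * Real.exp (m * F x)) ?_ ?_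
  · intro m
    exact mul_mem_cone (const_mem (Real.exp_pos _).le)
      (exp_mem (mul_mem_cone (const_mem (Nat.cast_nonneg m)) hF))
  · intro x
    have e : ∀ m : ℕ, Real.exp (-(m * c)) * Real.exp (m * F x) = Real.exp (F x - c) ^ m := by
      intro m
      rw [← Real.exp_add, ← Real.exp_nat_mul]
      ring_nf
    simp only [e]
    split_ifs with h
    · simp [h]
    · refine tendsto_pow_atTop_nhds_zero_of_lt_one (Real.exp_pos _).le ?_
      rw [Real.exp_lt_one_iff]
      exact sub_neg.2 (lt_of_le_of_ne (hc x) h)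

/-- Every element of the cone has nonnegative sum: for a monomial the sum factorizes over sites. -/
lemma sum_nonneg_of_mem {n : ℕ} {F : (Fin n → Fin 4 → Bool) → ℝ} (hF : F ∈ modeCone n) :
    0 ≤ ∑ x, F x := by
  have hclosed : IsClosed {F : (Fin n → Fin 4 → Bool) → ℝ | 0 ≤ ∑ x, F x} :=
    isClosed_le continuous_const (by fun_prop)
  refine closure_minimal ?_ hclosed hF
  intro G hG
  rw [Submonoid.subsemiringClosure_coe] at hG
  induction hG using AddSubmonoid.closure_induction with
  | mem G hG =>
    obtain ⟨c, hc, e, rfl⟩ := hG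
    show 0 ≤ ∑ x : Fin n → Fin 4 → Bool, c * ∏ a, ∏ k, mode k (x a) ^ e a k
    rw [← Finset.mul_sum, ← Fintype.prod_sum (fun a q => ∏ k, mode k q ^ e a k)]
    exact mul_nonneg hc (Finset.prod_nonneg fun a _ => sum_mode_monomial_nonneg (e a))
  | zero => simp
  | add G H _ _ hG hH =>
    have hG' : 0 ≤ ∑ x, G x := hG
    have hH' : 0 ≤ ∑ x, H x := hH
    show 0 ≤ ∑ x, (G x + H x)
    rw [Finset.sum_add_distrib]
    exact add_nonneg hG' hH'

/-! ### The four-replica system -/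

/-- The sets on which the four replicas are conditioned to be `+1`. -/
def pins {n : ℕ} (A B : Finset (Fin n)) : Fin 4 → Finset (Fin n) := ![A ∪ B, A, B, A ∩ B]

/-- The indicator that every replica satisfies its pinning constraint lies in the cone. At a site of
`A ∩ B`, `A \ B`, `B \ A` the constraint says that `α`, `α + β`, `α + γ` respectively equals its
upper bound `2`: for instance `α + β` is the sum of the spins of the first two replicas. -/
lemma pin_mem {n : ℕ} (A B : Finset (Fin n)) :
    (fun x : Fin n → Fin 4 → Bool =>
      ∏ c, if ∀ s ∈ pins A B c, x s c = true then (1 : ℝ) else 0) ∈ modeCone n := by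
  have hlocal : ∀ a : Fin n, (fun x : Fin n → Fin 4 → Bool =>
      if ∀ c, a ∈ pins A B c → x a c = true then (1 : ℝ) else 0) ∈ modeCone n := by
    intro a
    by_cases hA : a ∈ A <;> by_cases hB : a ∈ B
    · convert indicator_mem (mode_mem 0 a) 2 ?_ using 3 with x
      · generalize x a = q
        simp only [Fin.forall_fin_succ, pins, mode_zero]
        rcases h0 : q 0 <;> rcases h1 : q 1 <;> rcases h2 : q 2 <;> rcases h3 : q 3 <;>
          simp [hA, hB, h1, h2, h3, spin] <;> norm_num
      · intro x
        simp only [mode_zero]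
        linarith [spin_le_one (x a 0), spin_le_one (x a 1), spin_le_one (x a 2),
          spin_le_one (x a 3)]
    · convert indicator_mem (add_mem_cone (mode_mem 0 a) (mode_mem 1 a)) 2 ?_ using 3 with x
      · generalize x a = q
        simp only [Fin.forall_fin_succ, pins, mode_zero, mode_one]
        rcases h0 : q 0 <;> rcases h1 : q 1 <;> rcases h2 : q 2 <;> rcases h3 : q 3 <;>
          simp [hA, hB, h1, h2, h3, spin] <;> norm_num
      · intro x
        simp only [mode_zero, mode_one]
        linarith [spin_le_one (x a 0), spin_le_one (x a 1), spin_le_one (x a 2),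
          spin_le_one (x a 3)]
    · convert indicator_mem (add_mem_cone (mode_mem 0 a) (mode_mem 2 a)) 2 ?_ using 3 with x
      · generalize x a = q
        simp only [Fin.forall_fin_succ, pins, mode_zero, mode_two]
        rcases h0 : q 0 <;> rcases h1 : q 1 <;> rcases h2 : q 2 <;> rcases h3 : q 3 <;>
          simp [hA, hB, h1, h2, h3, spin] <;> norm_num
      · intro x
        simp only [mode_zero, mode_two]
        linarith [spin_le_one (x a 0), spin_le_one (x a 1), spin_le_one (x a 2),
          spin_le_one (x a 3)]
    · convert const_mem (n := n) zero_le_one using 2 with x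
      simp [Fin.forall_fin_succ, pins, hA, hB]
  convert prod_mem_cone Finset.univ (fun a _ => hlocal a) using 2 with x
  rw [Finset.prod_boole, Finset.prod_boole]
  congr 1
  simp only [Finset.mem_univ, true_implies, eq_iff_iff]
  exact ⟨fun h a c ha => h c a ha, fun h c a ha => h a c ha⟩

/-- The joint weight of four replicas pinned on `pins A B` lies in the cone: the change of variables
is orthogonal and maps a common field to a nonnegative field on the mode `0`. -/
lemma fourWeight_mem {n : ℕ} {J : Fin n → Fin n → ℝ} {h : Fin n → ℝ}
    (hJ : ∀ a b, 0 ≤ J a b) (hh : ∀ a, 0 ≤ h a) (A B : Finset (Fin n)) :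
    (fun x : Fin n → Fin 4 → Bool =>
      ∏ c, if ∀ s ∈ pins A B c, x s c = true then isingWeight n J h (fun a => x a c) else 0)
      ∈ modeCone n := by
  have henergy : (fun x : Fin n → Fin 4 → Bool =>
      Real.exp ((1 / 2) * (∑ a, ∑ b, J a b * ∑ k, mode k (x a) * mode k (x b))
        + ∑ a, h a * (2 * mode 0 (x a)))) ∈ modeCone n := by
    refine exp_mem (add_mem_cone (mul_mem_cone (const_mem (by norm_num)) ?_) ?_)
    · exact sum_mem_cone _ fun a _ => sum_mem_cone _ fun b _ =>
        mul_mem_cone (const_mem (hJ a b)) (sum_mem_cone _ fun k _ =>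
          mul_mem_cone (mode_mem k a) (mode_mem k b))
    · exact sum_mem_cone _ fun a _ => mul_mem_cone (const_mem (hh a))
        (mul_mem_cone (const_mem zero_le_two) (mode_mem 0 a))
  convert mul_mem_cone (pin_mem A B) henergy using 2 with x
  have hw : Real.exp ((1 / 2) * (∑ a, ∑ b, J a b * ∑ k, mode k (x a) * mode k (x b))
        + ∑ a, h a * (2 * mode 0 (x a))) = ∏ c, isingWeight n J h (fun a => x a c) := by
    simp only [isingWeight]
    rw [← Real.exp_sum]
    congr 1
    have horth : ∀ a b, ∑ k, mode k (x a) * mode k (x b) = ∑ c, spin (x a c) * spin (x b c) := by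
      intro a b
      simp only [Fin.sum_univ_four, mode_zero, mode_one, mode_two, mode_three]
      ring
    have hfield : ∀ a, 2 * mode 0 (x a) = ∑ c, spin (x a c) := by
      intro a
      simp only [Fin.sum_univ_four, mode_zero]
      ring
    simp only [horth, hfield]
    have hquad : ∑ c, ∑ a, ∑ b, J a b * spin (x a c) * spin (x b c) =
        ∑ a, ∑ b, J a b * ∑ c, spin (x a c) * spin (x b c) := by
      rw [Finset.sum_comm]
      refine Finset.sum_congr rfl fun a _ => ?_
      rw [Finset.sum_comm]
      simp only [Finset.mul_sum, mul_assoc]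
    have hlin : ∑ c, ∑ a, h a * spin (x a c) = ∑ a, h a * ∑ c, spin (x a c) := by
      rw [Finset.sum_comm]
      simp only [Finset.mul_sum]
    rw [Finset.sum_add_distrib, ← Finset.mul_sum, hquad, hlin]
  rw [hw, ← Finset.prod_mul_distrib]
  refine Finset.prod_congr rfl fun c _ => ?_
  split_ifs <;> simp

lemma denom_pos {n : ℕ} (J : Fin n → Fin n → ℝ) (h : Fin n → ℝ) (S : Finset (Fin n)) :
    0 < ∑ x : Fin n → Bool, if ∀ s ∈ S, x s = true then isingWeight n J h x else 0 := by
  refine Finset.sum_pos' ?_ ⟨fun _ => true, Finset.mem_univ _, ?_⟩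
  · intro x _
    split_ifs
    · exact (Real.exp_pos _).le
    · exact le_rfl
  · simpa [isingWeight] using Real.exp_pos _

/-- In the four-replica system pinned on `pins A B`, every mode at the site `i` has nonnegative
expectation; by independence this is a linear inequality between the four influences. -/
lemma mode_expectation_nonneg {n : ℕ} {J : Fin n → Fin n → ℝ} {h : Fin n → ℝ}
    (hJ : ∀ a b, 0 ≤ J a b) (hh : ∀ a, 0 ≤ h a) (i : Fin n) (A B : Finset (Fin n)) (k : Fin 4) :
    0 ≤ ∑ c, modeSign k c * influence n J h i (pins A B c) := by
  set P := pins A B with hP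
  let w : Fin 4 → (Fin n → Bool) → ℝ := fun c y =>
    if ∀ s ∈ P c, y s = true then isingWeight n J h y else 0
  let D : Fin 4 → ℝ := fun c => ∑ y, w c y
  have hD : ∀ c, 0 < D c := fun c => denom_pos J h (P c)
  have hinf : ∀ c, influence n J h i (P c) * D c = ∑ y, spin (y i) * w c y := by
    intro c
    have hne := (hD c).ne'
    simp only [influence, D, w] at hne ⊢
    rw [div_mul_cancel₀ _ hne]
    refine Finset.sum_congr rfl fun y _ => ?_
    split_ifs <;> simp
  have hswap : ∀ f : Fin 4 → (Fin n → Bool) → ℝ,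
      ∑ x : Fin n → Fin 4 → Bool, ∏ c, f c (fun a => x a c) = ∏ c, ∑ y, f c y := by
    intro f
    rw [Fintype.prod_sum]
    exact (Equiv.piComm (fun (_ : Fin n) (_ : Fin 4) => Bool)).sum_comp
      (fun X => ∏ c, f c (X c))
  have hone : ∀ c, ∑ x : Fin n → Fin 4 → Bool, spin (x i c) * ∏ c', w c' (fun a => x a c') =
      influence n J h i (P c) * ∏ c', D c' := by
    intro c
    have h1 := hswap fun c' y => (if c' = c then spin (y i) else 1) * w c' y
    simp only [Finset.prod_mul_distrib, Finset.prod_ite_eq', Finset.mem_univ, if_true] at h1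
    rw [h1]
    rw [← Finset.mul_prod_erase _ _ (Finset.mem_univ c),
      ← Finset.mul_prod_erase _ D (Finset.mem_univ c), ← mul_assoc, hinf]
    congr 1
    · simp
    · refine Finset.prod_congr rfl fun c' hc' => ?_
      simp [Finset.ne_of_mem_erase hc', D]
  have hpos := sum_nonneg_of_mem (mul_mem_cone (mode_mem k i) (fourWeight_mem hJ hh A B))
  have heq : ∑ x : Fin n → Fin 4 → Bool, mode k (x i) * ∏ c, w c (fun a => x a c) =
      (∑ c, modeSign k c * influence n J h i (P c)) * ((∏ c, D c) / 2) := by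
    calc _ = ∑ x : Fin n → Fin 4 → Bool, ∑ c,
          modeSign k c / 2 * (spin (x i c) * ∏ c', w c' (fun a => x a c')) := by
          refine Finset.sum_congr rfl fun x _ => ?_
          rw [mode, Finset.sum_div, Finset.sum_mul]
          exact Finset.sum_congr rfl fun c _ => by ring
      _ = _ := by
          rw [Finset.sum_comm, Finset.sum_mul]
          refine Finset.sum_congr rfl fun c _ => ?_
          rw [← Finset.mul_sum, hone]
          ring
  have hpos' : 0 ≤ (∑ c, modeSign k c * influence n J h i (P c)) * ((∏ c, D c) / 2) :=
    heq ▸ hpos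
  exact nonneg_of_mul_nonneg_left hpos'
    (div_pos (Finset.prod_pos fun c _ => hD c) two_pos)

/-! ### Monotonicity and submodularity of the influence -/

/-- For `B ⊆ A` the four pinned sets are `A, A, B, B`, and the mode `1` compares the two pairs. -/
lemma influence_mono {n : ℕ} {J : Fin n → Fin n → ℝ} {h : Fin n → ℝ}
    (hJ : ∀ a b, 0 ≤ J a b) (hh : ∀ a, 0 ≤ h a) (i : Fin n) {A B : Finset (Fin n)} (hBA : B ⊆ A) :
    influence n J h i B ≤ influence n J h i A := by
  have := mode_expectation_nonneg hJ hh i A B 1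
  simp only [Fin.sum_univ_four, modeSign, pins, Finset.union_eq_left.2 hBA,
    Finset.inter_eq_right.2 hBA] at this
  simp at this
  linarith

/-- The mode `3` gives the conditioned form of the Griffiths–Hurst–Sherman inequality. -/
lemma influence_submodular {n : ℕ} {J : Fin n → Fin n → ℝ} {h : Fin n → ℝ}
    (hJ : ∀ a b, 0 ≤ J a b) (hh : ∀ a, 0 ≤ h a) (i : Fin n) (A B : Finset (Fin n)) :
    influence n J h i (A ∪ B) + influence n J h i (A ∩ B) ≤
      influence n J h i A + influence n J h i B := by
  have := mode_expectation_nonneg hJ hh i A B 3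
  simp only [Fin.sum_univ_four, modeSign, pins] at this
  simp at this
  linarith

/-- Telescoping over `U`: by submodularity, the gain of `j` over `S ∪ U` is at most its gain over
`S`. -/
lemma influence_union_sub_le {n : ℕ} {J : Fin n → Fin n → ℝ} {h : Fin n → ℝ}
    (hJ : ∀ a b, 0 ≤ J a b) (hh : ∀ a, 0 ≤ h a) (i : Fin n) (S U : Finset (Fin n))
    (hSU : Disjoint S U) :
    influence n J h i (S ∪ U) - influence n J h i S ≤
      ∑ j ∈ U, (influence n J h i (insert j S) - influence n J h i S) := by
  induction U using Finset.induction_on with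
  | empty => simp
  | insert j U hj ih =>
    rw [Finset.disjoint_insert_right] at hSU
    have hsub := influence_submodular hJ hh i (S ∪ U) (insert j S)
    have h1 : (S ∪ U) ∪ insert j S = S ∪ insert j U := by grind
    have h2 : (S ∪ U) ∩ insert j S = S := by grind
    rw [h1, h2] at hsub
    rw [Finset.sum_insert hj]
    linarith [ih hSU.2]

/-- If `I_i(T) > I_i(S)` in a ferromagnetic Ising model, then some element `j ∈ T \ S`
has marginal gain at least `(I_i(T) - I_i(S)) / |T \ S|`. -/
theorem good_element (n : ℕ) (J : Fin n → Fin n → ℝ) (h : Fin n → ℝ)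
    (hsymm : ∀ a b, J a b = J b a) (hdiag : ∀ a, J a a = 0)
    (hJ : ∀ a b, 0 ≤ J a b) (hh : ∀ a, 0 ≤ h a)
    (i : Fin n) (S T : Finset (Fin n))
    (hgt : influence n J h i T > influence n J h i S) :
    ∃ j ∈ T \ S,
      influence n J h i (insert j S) - influence n J h i S ≥
        (influence n J h i T - influence n J h i S) / ((T \ S).card : ℝ) := by
  by_contra! hcon
  have hne : (T \ S).Nonempty := by
    rw [Finset.nonempty_iff_ne_empty, Ne, Finset.sdiff_eq_empty_iff_subset]
    exact fun hTS => absurd (influence_mono hJ hh i hTS) (not_le.2 hgt)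
  have hcard : ((T \ S).card : ℝ) ≠ 0 := by
    exact_mod_cast hne.card_pos.ne'
  have hlt := Finset.sum_lt_sum_of_nonempty hne hcon
  rw [Finset.sum_const, nsmul_eq_mul, mul_div_cancel₀ _ hcard] at hlt
  have htel := influence_union_sub_le hJ hh i S (T \ S) Finset.disjoint_sdiff
  have hT : influence n J h i T ≤ influence n J h i (S ∪ T \ S) :=
    influence_mono hJ hh i (by rw [Finset.union_sdiff_self_eq_union]; exact Finset.subset_union_right)
  linarith
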